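/- If H is a 4-uniform hypergraph that is 2-regular (every vertex has degree exactly 2), then τ_g(H) ≤ (7/9) m(H). -/

import Mathlib

variable {V : Type} [Fintype V] [DecidableEq V]

/-- The set of legal moves in the transversal game with uncovered edge set `E`:
the vertices hitting at least one uncovered edge. -/
def playable (E : Finset (Finset V)) : Finset V :=
  Finset.univ.filter (fun v => ∃ e ∈ E, v ∈ e)

/-- The number of moves remaining in the transversal game with uncovered edge set `E`
under optimal play, where `ehTurn = true` iff Edge-hitter (the minimizer) moves next;
Staller (the maximizer) moves next iff `ehTurn = false`.  Each move must hit at least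
one uncovered edge, and the game ends when no uncovered edge remains. -/
def gameVal (ehTurn : Bool) (E : Finset (Finset V)) : ℕ :=
  if h : (playable E).Nonempty then
    1 +
      (if ehTurn then
        (playable E).attach.inf' (Finset.attach_nonempty_iff.mpr h)
          (fun v => gameVal (!ehTurn) (E.filter (fun e => v.1 ∉ e)))
      else
        (playable E).attach.sup' (Finset.attach_nonempty_iff.mpr h)
          (fun v => gameVal (!ehTurn) (E.filter (fun e => v.1 ∉ e))))
  else 0
termination_by E.card
decreasing_by
  all_goals
    obtain ⟨v, hv⟩ := v
    simp only [playable, Finset.mem_filter, Finset.mem_univ, true_and] at hv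
    obtain ⟨e, he, hve⟩ := hv
    exact Finset.card_lt_card (Finset.filter_ssubset.mpr ⟨e, he, by simp [hve]⟩)

/-- The game transversal number `τ_g`: Edge-hitter makes the first move. -/
def gameTransversalNum (E : Finset (Finset V)) : ℕ := gameVal true E

/-- The Staller-start game transversal number `τ_g'`: Staller makes the first move. -/
def stallerGameTransversalNum (E : Finset (Finset V)) : ℕ := gameVal false E

/-- The transversal number `τ`: the minimum size of a set of vertices meeting all edges. -/
noncomputable def transversalNum (E : Finset (Finset V)) : ℕ :=
  sInf {n | ∃ T : Finset V, (∀ e ∈ E, ∃ v ∈ T, v ∈ e) ∧ T.card = n}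

/-- Every vertex lies in at most two of the edges. -/
def DegTwo (E : Finset (Finset V)) : Prop :=
  ∀ v : V, ∀ x ∈ E, ∀ y ∈ E, ∀ z ∈ E, v ∈ x → v ∈ y → v ∈ z → x = y ∨ x = z ∨ y = z

/-- Number of vertices of `x` lying in no other edge of `E`. -/
def priv (E : Finset (Finset V)) (x : Finset V) : ℕ :=
  (x.filter (fun v => ∀ y ∈ E, v ∈ y → y = x)).card

/-- Weight of a position. -/
def wt (E : Finset (Finset V)) : ℕ := 5 * E.card + (playable E).card

/-- Gain of a double move hitting `x` and `y`. -/
def gain (E : Finset (Finset V)) (x y : Finset V) : ℕ :=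
  (x ∩ y).card + priv E x + priv E y

/-- Position in which a double move of gain at least `2` exists. -/
def Good (E : Finset (Finset V)) : Prop :=
  ∃ x ∈ E, ∃ y ∈ E, x ≠ y ∧ 0 < (x ∩ y).card ∧ 2 ≤ gain E x y

lemma DegTwo.mono {E F : Finset (Finset V)} (h : DegTwo E) (hF : F ⊆ E) : DegTwo F :=
  fun v x hx y hy z hz => h v x (hF hx) y (hF hy) z (hF hz)

lemma playable_erase (E : Finset (Finset V)) (w : Finset V) (hw : w ∈ E) :
    (playable (E.erase w)).card + priv E w = (playable E).card := by
  unfold priv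
  rw [← Finset.card_union_of_disjoint]
  · congr 1
    ext v
    simp only [playable, Finset.mem_union, Finset.mem_filter, Finset.mem_univ, true_and,
      Finset.mem_erase]
    constructor
    · rintro (⟨e, ⟨_, he⟩, hv⟩ | ⟨hv, _⟩)
      · exact ⟨e, he, hv⟩
      · exact ⟨w, hw, hv⟩
    · rintro ⟨e, he, hv⟩
      by_cases h : ∃ e, (e ≠ w ∧ e ∈ E) ∧ v ∈ e
      · exact Or.inl h
      · right
        push Not at h
        have h' : ∀ y ∈ E, v ∈ y → y = w := by
          intro y hy hvy
          by_contra hne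
          exact h y ⟨hne, hy⟩ hvy
        exact ⟨h' e he hv ▸ hv, h'⟩
  · rw [Finset.disjoint_left]
    intro v h1 h2
    simp only [playable, Finset.mem_filter, Finset.mem_univ, true_and,
      Finset.mem_erase] at h1 h2
    obtain ⟨e, ⟨hne, he⟩, hv⟩ := h1
    exact hne (h2.2 e he hv)

lemma priv_erase {E : Finset (Finset V)} (hD : DegTwo E) {w x : Finset V} (hw : w ∈ E)
    (hx : x ∈ E) (hne : x ≠ w) :
    priv (E.erase w) x = priv E x + (x ∩ w).card := by
  unfold priv
  rw [← Finset.card_union_of_disjoint]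
  · congr 1
    ext v
    simp only [Finset.mem_union, Finset.mem_filter, Finset.mem_inter, Finset.mem_erase]
    constructor
    · rintro ⟨hv, h⟩
      by_cases hvw : v ∈ w
      · exact Or.inr ⟨hv, hvw⟩
      · left
        refine ⟨hv, fun y hy hvy => h y ⟨?_, hy⟩ hvy⟩
        rintro rfl
        exact hvw hvy
    · rintro (⟨hv, h⟩ | ⟨hv, hvw⟩)
      · exact ⟨hv, fun y hy hvy => h y hy.2 hvy⟩
      · refine ⟨hv, fun y hy hvy => ?_⟩
        rcases hD v x hx w hw y hy.2 hv hvw hvy with h | h | h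
        · exact absurd h hne
        · exact h.symm
        · exact absurd h.symm hy.1
  · rw [Finset.disjoint_left]
    intro v h1 h2
    simp only [Finset.mem_filter, Finset.mem_inter] at h1 h2
    exact hne (h1.2 w hw h2.2).symm

lemma priv_sum (n : ℕ) : ∀ {E : Finset (Finset V)}, E.card = n → DegTwo E →
    ∀ {x : Finset V}, x ∈ E →
    priv E x + ∑ y ∈ E.erase x, (x ∩ y).card = x.card := by
  induction n with
  | zero =>
    intro E hE _ x hx
    rw [Finset.card_eq_zero] at hE
    simp [hE] at hx
  | succ n ih =>
    intro E hE hD x hx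
    by_cases h : ∃ w ∈ E, x ≠ w
    · obtain ⟨w, hw, hne⟩ := h
      have h1 := ih (E := E.erase w) (by rw [Finset.card_erase_of_mem hw]; omega)
        (hD.mono (Finset.erase_subset _ _)) (Finset.mem_erase.2 ⟨hne, hx⟩)
      rw [priv_erase hD hw hx hne, Finset.erase_right_comm] at h1
      have h2 := Finset.add_sum_erase (E.erase x) (fun y => (x ∩ y).card)
        (Finset.mem_erase.2 ⟨hne.symm, hw⟩)
      omega
    · push Not at h
      have h1 : E.erase x = ∅ := by
        ext y
        simp only [Finset.mem_erase, Finset.notMem_empty, iff_false, not_and]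
        intro hy hyE
        exact hy (h y hyE).symm
      rw [h1]
      unfold priv
      simp only [Finset.sum_empty, add_zero]
      congr 1
      rw [Finset.filter_eq_self]
      intro v _ y hy _
      exact (h y hy).symm

lemma gameVal_true_le {E : Finset (Finset V)} {v : V} (hv : v ∈ playable E) :
    gameVal true E ≤ 1 + gameVal false (E.filter (fun e => v ∉ e)) := by
  have h : (playable E).Nonempty := ⟨v, hv⟩
  rw [gameVal, dif_pos h, if_pos rfl]
  gcongr
  exact Finset.inf'_le (fun v : {x // x ∈ playable E} =>
    gameVal (!true) (E.filter (fun e => v.1 ∉ e))) (Finset.mem_attach _ ⟨v, hv⟩)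

lemma gameVal_empty (b : Bool) {E : Finset (Finset V)} (h : ¬ (playable E).Nonempty) :
    gameVal b E = 0 := by
  rw [gameVal, dif_neg h]

lemma gameVal_false_le {E : Finset (Finset V)} {N : ℕ}
    (h : ∀ v ∈ playable E, 1 + gameVal true (E.filter (fun e => v ∉ e)) ≤ N) :
    gameVal false E ≤ N := by
  by_cases hp : (playable E).Nonempty
  · have : gameVal false E = 1 + (playable E).attach.sup' (Finset.attach_nonempty_iff.mpr hp)
          (fun v => gameVal true (E.filter (fun e => v.1 ∉ e))) := by
      rw [gameVal, dif_pos hp]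
      simp
    rw [this]
    obtain ⟨v, _, hv⟩ := Finset.exists_mem_eq_sup' (Finset.attach_nonempty_iff.mpr hp)
      (fun v : {x // x ∈ playable E} => gameVal true (E.filter (fun e => v.1 ∉ e)))
    rw [hv]
    exact h v.1 v.2
  · rw [gameVal_empty _ hp]; omega

lemma filter_card_lt {E : Finset (Finset V)} {v : V} (hv : v ∈ playable E) :
    (E.filter (fun e => v ∉ e)).card < E.card := by
  simp only [playable, Finset.mem_filter, Finset.mem_univ, true_and] at hv
  obtain ⟨e, he, hve⟩ := hv
  exact Finset.card_lt_card (Finset.filter_ssubset.mpr ⟨e, he, by simp [hve]⟩)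

lemma gameVal_le_card (n : ℕ) : ∀ (E : Finset (Finset V)), E.card ≤ n → ∀ b,
    gameVal b E ≤ E.card := by
  induction n with
  | zero =>
    intro E hE b
    rw [gameVal_empty]
    · omega
    · rintro ⟨v, hv⟩
      have := filter_card_lt hv
      omega
  | succ n ih =>
    intro E hE b
    cases b
    · refine gameVal_false_le fun v hv => ?_
      have h1 := filter_card_lt hv
      have := ih (E.filter (fun e => v ∉ e)) (by omega) true
      omega
    · by_cases hp : (playable E).Nonempty
      · obtain ⟨v, hv⟩ := hp
        have h0 := gameVal_true_le hv
        have h1 := filter_card_lt hv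
        have := ih (E.filter (fun e => v ∉ e)) (by omega) false
        omega
      · rw [gameVal_empty _ hp]; omega

/-- The key lemma: after a maximum gain double move (of gain at most `2`) and a single
move of gain `1`, a double move of gain at least `2` exists. -/
lemma key {E : Finset (Finset V)} (h4 : ∀ e ∈ E, e.card = 4) (hD : DegTwo E)
    {u v w : Finset V} (hu : u ∈ E) (hv : v ∈ E) (hw : w ∈ E) (huv : u ≠ v) (hwu : w ≠ u)
    (hwv : w ≠ v) (hpos : 0 < (u ∩ v).card)
    (hmax : ∀ x ∈ E, ∀ y ∈ E, x ≠ y → 0 < (x ∩ y).card → gain E x y ≤ gain E u v)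
    (hg : gain E u v ≤ 2)
    (hw1 : priv E w + (w ∩ u).card + (w ∩ v).card = 1) :
    Good (((E.erase u).erase v).erase w) := by
  by_contra hbad
  set R := ((E.erase u).erase v).erase w with hR
  have hRm : ∀ x, x ∈ R ↔ x ≠ w ∧ x ≠ v ∧ x ≠ u ∧ x ∈ E := by
    intro x; simp [hR]
  have hRE : R ⊆ E := fun x hx => ((hRm x).1 hx).2.2.2
  have hDR := hD.mono hRE
  have hD1 : DegTwo (E.erase u) := hD.mono (Finset.erase_subset _ _)
  have hD2 : DegTwo ((E.erase u).erase v) := hD1.mono (Finset.erase_subset _ _)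
  have hprivR : ∀ x ∈ R, priv R x = priv E x + (x ∩ u).card + (x ∩ v).card + (x ∩ w).card := by
    intro x hx
    obtain ⟨hxw, hxv, hxu, hxE⟩ := (hRm x).1 hx
    rw [hR, priv_erase hD2 (by simp [hw, hwu, hwv]) (by simp [*]) hxw,
      priv_erase hD1 (by simp [hv, huv.symm]) (by simp [*]) hxv,
      priv_erase hD hu hxE hxu]
  -- edges of `R` touching `u, v, w` are isolated in `R`
  have hiso : ∀ x ∈ R, 0 < (x ∩ u).card + (x ∩ v).card + (x ∩ w).card →
      priv E x + (x ∩ u).card + (x ∩ v).card + (x ∩ w).card = 4 := by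
    intro x hx hs
    rw [← hprivR x hx, ← h4 x (hRE hx), ← priv_sum _ rfl hDR hx]
    have : ∑ y ∈ R.erase x, (x ∩ y).card = 0 := by
      apply Finset.sum_eq_zero
      intro y hy
      obtain ⟨hyx, hyR⟩ := Finset.mem_erase.1 hy
      by_contra hne
      apply hbad
      refine ⟨x, hx, y, hyR, hyx.symm, by omega, ?_⟩
      have := hprivR x hx
      unfold gain
      omega
    omega
  have hnb : ∀ x ∈ R, ∀ z ∈ E, x ≠ z → 0 < (x ∩ z).card →
      (x ∩ z).card + priv E x + priv E z ≤ gain E u v :=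
    fun x hx z hz hne hp => hmax x (hRE hx) z hz hne hp
  -- sums
  have hsumw : ∑ x ∈ R, (x ∩ w).card + priv E w + (w ∩ u).card + (w ∩ v).card = 4 := by
    have h1 := priv_sum _ rfl hD hw
    have h2 := Finset.add_sum_erase (E.erase w) (fun y => (w ∩ y).card)
      (Finset.mem_erase.2 ⟨hwu.symm, hu⟩)
    have h3 := Finset.add_sum_erase ((E.erase w).erase u) (fun y => (w ∩ y).card)
      (a := v) (by simp [hv, huv.symm, hwv.symm])
    have h5 : ((E.erase w).erase u).erase v = R := by ext x; simp [hR]; tauto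
    rw [h5] at h3
    have h6 : ∑ x ∈ R, (x ∩ w).card = ∑ x ∈ R, (w ∩ x).card :=
      Finset.sum_congr rfl fun x _ => by rw [Finset.inter_comm]
    rw [h4 w hw] at h1
    omega
  have hsumu : ∑ x ∈ R, (x ∩ u).card + priv E u + (w ∩ u).card + (u ∩ v).card = 4 := by
    have h1 := priv_sum _ rfl hD hu
    have h2 := Finset.add_sum_erase (E.erase u) (fun y => (u ∩ y).card)
      (Finset.mem_erase.2 ⟨hwu, hw⟩)
    have h3 := Finset.add_sum_erase ((E.erase u).erase w) (fun y => (u ∩ y).card)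
      (a := v) (by simp [hv, huv.symm, hwv.symm])
    have h5 : ((E.erase u).erase w).erase v = R := by ext x; simp [hR]; tauto
    rw [h5] at h3
    have h6 : ∑ x ∈ R, (x ∩ u).card = ∑ x ∈ R, (u ∩ x).card :=
      Finset.sum_congr rfl fun x _ => by rw [Finset.inter_comm]
    rw [h4 u hu] at h1
    rw [Finset.inter_comm w u]
    omega
  have hsumv : ∑ x ∈ R, (x ∩ v).card + priv E v + (w ∩ v).card + (u ∩ v).card = 4 := by
    have h1 := priv_sum _ rfl hD hv
    have h2 := Finset.add_sum_erase (E.erase v) (fun y => (v ∩ y).card)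
      (Finset.mem_erase.2 ⟨hwv, hw⟩)
    have h3 := Finset.add_sum_erase ((E.erase v).erase w) (fun y => (v ∩ y).card)
      (a := u) (by simp [hu, huv, hwu.symm])
    have h5 : ((E.erase v).erase w).erase u = R := by ext x; simp [hR]; tauto
    rw [h5] at h3
    have h6 : ∑ x ∈ R, (x ∩ v).card = ∑ x ∈ R, (v ∩ x).card :=
      Finset.sum_congr rfl fun x _ => by rw [Finset.inter_comm]
    rw [h4 v hv] at h1
    rw [Finset.inter_comm w v, Finset.inter_comm u v]
    omega
  -- abbreviations
  set g := gain E u v with hgdef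
  have hgv : g = (u ∩ v).card + priv E u + priv E v := rfl
  set T := R.filter (fun x => 0 < (x ∩ u).card + (x ∩ v).card + (x ∩ w).card) with hT
  have hTm : ∀ x, x ∈ T ↔ x ∈ R ∧ 0 < (x ∩ u).card + (x ∩ v).card + (x ∩ w).card := by
    intro x; simp [hT]
  -- facts on each element of T
  have hfact : ∀ x ∈ T,
      priv E x + (x ∩ u).card + (x ∩ v).card + (x ∩ w).card = 4 ∧
      ((x ∩ u).card = 0 ∨ (x ∩ u).card + priv E x + priv E u ≤ g) ∧
      ((x ∩ v).card = 0 ∨ (x ∩ v).card + priv E x + priv E v ≤ g) ∧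
      ((x ∩ w).card = 0 ∨ (x ∩ w).card + priv E x + priv E w ≤ g) := by
    intro x hx
    obtain ⟨hxR, hs⟩ := (hTm x).1 hx
    obtain ⟨hxw, hxv, hxu, hxE⟩ := (hRm x).1 hxR
    exact ⟨hiso x hxR hs,
      (Nat.eq_zero_or_pos _).imp_right (hnb x hxR u hu hxu),
      (Nat.eq_zero_or_pos _).imp_right (hnb x hxR v hv hxv),
      (Nat.eq_zero_or_pos _).imp_right (hnb x hxR w hw hxw)⟩
  have hTu : ∑ x ∈ R, (x ∩ u).card = ∑ x ∈ T, (x ∩ u).card := by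
    refine (Finset.sum_subset (Finset.filter_subset _ _) fun x hx hxT => ?_).symm
    by_contra h
    exact hxT ((hTm x).2 ⟨hx, by omega⟩)
  have hTv : ∑ x ∈ R, (x ∩ v).card = ∑ x ∈ T, (x ∩ v).card := by
    refine (Finset.sum_subset (Finset.filter_subset _ _) fun x hx hxT => ?_).symm
    by_contra h
    exact hxT ((hTm x).2 ⟨hx, by omega⟩)
  have hTw : ∑ x ∈ R, (x ∩ w).card = ∑ x ∈ T, (x ∩ w).card := by
    refine (Finset.sum_subset (Finset.filter_subset _ _) fun x hx hxT => ?_).symm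
    by_contra h
    exact hxT ((hTm x).2 ⟨hx, by omega⟩)
  rw [hTu] at hsumu
  rw [hTv] at hsumv
  rw [hTw] at hsumw
  have hcard : T.card * 3 ≤ ∑ x ∈ T, ((x ∩ u).card + (x ∩ v).card + (x ∩ w).card) := by
    rw [← smul_eq_mul]
    refine Finset.card_nsmul_le_sum _ _ _ fun x hx => ?_
    have := hfact x hx
    have := ((hTm x).1 hx).2
    omega
  rw [Finset.sum_add_distrib, Finset.sum_add_distrib] at hcard
  have hg2 : g = 2 := by
    have hne : T.Nonempty := by
      by_contra hE
      rw [Finset.not_nonempty_iff_eq_empty] at hE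
      rw [hE, Finset.sum_empty] at hsumw
      omega
    obtain ⟨x, hx⟩ := hne
    have := hfact x hx
    have := ((hTm x).1 hx).2
    omega
  have hT2 : T.card ≤ 2 := by omega
  have hcases : T.card = 0 ∨ T.card = 1 ∨ T.card = 2 := by omega
  rcases hcases with h | h | h
  · rw [Finset.card_eq_zero] at h
    rw [h] at hsumw
    simp at hsumw
    omega
  · obtain ⟨x, hx⟩ := Finset.card_eq_one.1 h
    have := hfact x (by rw [hx]; simp)
    rw [hx, Finset.sum_singleton] at hsumw
    omega
  · obtain ⟨x, y, hxy, hx⟩ := Finset.card_eq_two.1 h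
    have h1 := hfact x (by rw [hx]; simp)
    have h2 := hfact y (by rw [hx]; simp)
    rw [hx, Finset.sum_pair hxy] at hsumw hsumu hsumv
    omega

lemma filter_two {E : Finset (Finset V)} (hD : DegTwo E) {x y : Finset V} (hx : x ∈ E)
    (hy : y ∈ E) (hne : x ≠ y) {v : V} (hvx : v ∈ x) (hvy : v ∈ y) :
    E.filter (fun e => v ∉ e) = (E.erase x).erase y := by
  ext z
  simp only [Finset.mem_filter, Finset.mem_erase]
  constructor
  · rintro ⟨hz, hv⟩
    refine ⟨?_, ?_, hz⟩
    · rintro rfl; exact hv hvy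
    · rintro rfl; exact hv hvx
  · rintro ⟨h1, h2, hz⟩
    refine ⟨hz, fun hv => ?_⟩
    rcases hD v x hx y hy z hz hvx hvy hv with h | h | h
    · exact hne h
    · exact h2 h.symm
    · exact h1 h.symm

lemma wt_erase {E : Finset (Finset V)} {w : Finset V} (hw : w ∈ E) :
    wt (E.erase w) + 5 + priv E w = wt E := by
  unfold wt
  have h1 := playable_erase E w hw
  have h2 := Finset.card_erase_add_one hw
  omega

lemma wt_erase_two {E : Finset (Finset V)} (hD : DegTwo E) {x y : Finset V} (hx : x ∈ E)
    (hy : y ∈ E) (hne : x ≠ y) :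
    wt ((E.erase x).erase y) + 10 + gain E x y = wt E := by
  have h1 := wt_erase hx
  have h2 := wt_erase (E := E.erase x) (w := y) (by simp [hy, hne.symm])
  rw [priv_erase hD hx hy hne.symm, Finset.inter_comm] at h2
  unfold gain
  omega

lemma playable_disjoint (n : ℕ) : ∀ {E : Finset (Finset V)}, E.card = n →
    (∀ e ∈ E, e.card = 4) → DegTwo E →
    (∀ x ∈ E, ∀ y ∈ E, x ≠ y → (x ∩ y).card = 0) → 9 * E.card ≤ wt E := by
  induction n with
  | zero =>
    intro E hE _ _ _
    omega
  | succ n ih =>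
    intro E hE h4 hD hd
    obtain ⟨x, hx⟩ : E.Nonempty := Finset.card_pos.1 (by omega)
    have hc := Finset.card_erase_add_one hx
    have h1 := ih (E := E.erase x) (by omega) (fun e he => h4 e (Finset.mem_of_mem_erase he))
      (hD.mono (Finset.erase_subset _ _))
      (fun y hy z hz => hd y (Finset.mem_of_mem_erase hy) z (Finset.mem_of_mem_erase hz))
    have h2 := wt_erase hx
    have h3 := priv_sum _ rfl hD hx
    have h5 : ∑ y ∈ E.erase x, (x ∩ y).card = 0 := Finset.sum_eq_zero fun y hy =>
      hd x hx y (Finset.mem_of_mem_erase hy) (Finset.ne_of_mem_erase hy).symm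
    rw [h4 x hx] at h3
    omega

lemma main_bound [DecidablePred (Good (V := V))] (n : ℕ) : ∀ {E : Finset (Finset V)}, E.card ≤ n →
    (∀ e ∈ E, e.card = 4) → DegTwo E →
    9 * gameVal true E + (if Good E then 1 else 0) ≤ wt E := by
  induction n with
  | zero =>
    intro E hE h4 hD
    have h0 : E = ∅ := Finset.card_eq_zero.1 (by omega)
    have hb : ¬ Good E := by
      rintro ⟨x, hx, _⟩
      simp [h0] at hx
    have := gameVal_le_card _ E le_rfl true
    rw [if_neg hb]
    omega
  | succ n ih =>
    intro E hE h4 hD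
    by_cases hadj : ∃ x ∈ E, ∃ y ∈ E, x ≠ y ∧ 0 < (x ∩ y).card
    · -- choose a pair of maximum gain
      obtain ⟨u, v, hu, hv, huv, hpos, hmax⟩ : ∃ u v, u ∈ E ∧ v ∈ E ∧ u ≠ v ∧
          0 < (u ∩ v).card ∧
          ∀ x ∈ E, ∀ y ∈ E, x ≠ y → 0 < (x ∩ y).card → gain E x y ≤ gain E u v := by
        let S := (E ×ˢ E).filter (fun p => p.1 ≠ p.2 ∧ 0 < (p.1 ∩ p.2).card)
        have hS : S.Nonempty := by
          obtain ⟨x, hx, y, hy, h⟩ := hadj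
          exact ⟨(x, y), by simp only [S, Finset.mem_filter, Finset.mem_product]; exact ⟨⟨hx, hy⟩, h⟩⟩
        obtain ⟨p, hp, hm⟩ := Finset.exists_max_image S (fun p => gain E p.1 p.2) hS
        simp only [S, Finset.mem_filter, Finset.mem_product] at hp hm
        exact ⟨p.1, p.2, hp.1.1, hp.1.2, hp.2.1, hp.2.2,
          fun x hx y hy hne h => hm (x, y) ⟨⟨hx, hy⟩, hne, h⟩⟩
      have hgood : Good E → 2 ≤ gain E u v := by
        rintro ⟨x, hx, y, hy, hne, hp, hg⟩
        exact hg.trans (hmax x hx y hy hne hp)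
      have hg1 : 1 ≤ gain E u v := by unfold gain; omega
      obtain ⟨a, ha⟩ := Finset.card_pos.1 hpos
      rw [Finset.mem_inter] at ha
      have hap : a ∈ playable E := by
        simp only [playable, Finset.mem_filter, Finset.mem_univ, true_and]
        exact ⟨u, hu, ha.1⟩
      have hstep := gameVal_true_le hap
      rw [filter_two hD hu hv huv ha.1 ha.2] at hstep
      have hw1 := wt_erase_two hD hu hv huv
      set F := (E.erase u).erase v with hF
      have hFm : ∀ x, x ∈ F ↔ x ≠ v ∧ x ≠ u ∧ x ∈ E := by intro x; simp [hF]
      have hFE : F ⊆ E := fun x hx => ((hFm x).1 hx).2.2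
      have hDF := hD.mono hFE
      have hFc : F.card + 2 = E.card := by
        have h1 := Finset.card_erase_add_one hu
        have h2 := Finset.card_erase_add_one (s := E.erase u) (a := v) (by simp [hv, huv.symm])
        rw [← hF] at h2
        omega
      have hS : 9 * gameVal false F + 9 + (if Good E then 1 else 0) ≤ wt E := by
        have hlow : 9 + (if Good E then 1 else 0) ≤ wt E := by
          split_ifs with hG
          · have := hgood hG; omega
          · omega
        have hN : gameVal false F ≤ (wt E - 9 - (if Good E then 1 else 0)) / 9 := by
          apply gameVal_false_le
          intro b hb
          rw [Nat.le_div_iff_mul_le (by norm_num)]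
          suffices 9 * gameVal true (F.filter (fun e => b ∉ e)) + 18 + (if Good E then 1 else 0)
              ≤ wt E by omega
          have hb' := hb
          simp only [playable, Finset.mem_filter, Finset.mem_univ, true_and] at hb'
          obtain ⟨w, hw, hbw⟩ := hb'
          have hlt := filter_card_lt hb
          have hIH := ih (E := F.filter (fun e => b ∉ e)) (by omega)
            (fun e he => h4 e (hFE (Finset.mem_of_mem_filter e he)))
            (hDF.mono (Finset.filter_subset _ _))
          by_cases hz : ∃ z ∈ F, w ≠ z ∧ b ∈ z
          · obtain ⟨z, hz, hwz, hbz⟩ := hz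
            rw [filter_two hDF hw hz hwz hbw hbz] at hIH ⊢
            have hw2 := wt_erase_two hDF hw hz hwz
            have : 0 < (w ∩ z).card :=
              Finset.card_pos.2 ⟨b, Finset.mem_inter.2 ⟨hbw, hbz⟩⟩
            have hg2 : 1 ≤ gain F w z := by unfold gain; omega
            split_ifs with hG <;> omega
          · push Not at hz
            have hfil : F.filter (fun e => b ∉ e) = F.erase w := by
              ext z
              simp only [Finset.mem_filter, Finset.mem_erase]
              constructor
              · rintro ⟨h1, h2⟩
                exact ⟨by rintro rfl; exact h2 hbw, h1⟩
              · rintro ⟨h1, h2⟩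
                exact ⟨h2, hz z h2 (Ne.symm h1)⟩
            rw [hfil] at hIH ⊢
            have hw2 := wt_erase hw
            have hp1 : 1 ≤ priv F w := by
              unfold priv
              refine Finset.card_pos.2 ⟨b, Finset.mem_filter.2 ⟨hbw, fun y hy hby => ?_⟩⟩
              by_contra hne
              exact hz y hy (Ne.symm hne) hby
            obtain ⟨hwv, hwu, hwE⟩ := (hFm w).1 hw
            have hpF : priv F w = priv E w + (w ∩ u).card + (w ∩ v).card := by
              rw [hF, priv_erase (hD.mono (Finset.erase_subset _ _)) (by simp [hv, huv.symm])
                (by simp [*]) hwv, priv_erase hD hu hwE hwu]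
            have hk : gain E u v ≤ 2 → priv F w = 1 → Good (F.erase w) := fun h1 h2 =>
              key h4 hD hu hv hwE huv hwu hwv hpos hmax h1 (by omega)
            by_cases hG : Good (F.erase w)
            · rw [if_pos hG] at hIH
              split_ifs with hGE
              · have := hgood hGE; omega
              · omega
            · rw [if_neg hG] at hIH
              have hk' : ¬ (gain E u v ≤ 2 ∧ priv F w = 1) := fun h => hG (hk h.1 h.2)
              split_ifs with hGE
              · have := hgood hGE; omega
              · omega
        have := Nat.div_mul_le_self (wt E - 9 - (if Good E then 1 else 0)) 9
        omega
      omega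
    · push Not at hadj
      have hd : ∀ x ∈ E, ∀ y ∈ E, x ≠ y → (x ∩ y).card = 0 := fun x hx y hy hne => by
        have := hadj x hx y hy hne; omega
      have h1 := playable_disjoint _ rfl h4 hD hd
      have h2 := gameVal_le_card _ E le_rfl true
      have hb : ¬ Good E := by
        rintro ⟨x, hx, y, hy, hne, hp, _⟩
        have := hd x hx y hy hne
        omega
      rw [if_neg hb]
      omega

/-- If `H` is a `4`-uniform `2`-regular hypergraph, then `τ_g(H) ≤ (7/9) m(H)`. -/
theorem gameTransversalNum_le_of_four_uniform_two_regular
    {V : Type} [Fintype V] [DecidableEq V] (E : Finset (Finset V))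
    (h4 : ∀ e ∈ E, e.card = 4)
    (hreg : ∀ v : V, (E.filter (fun e => v ∈ e)).card = 2) :
    (gameTransversalNum E : ℚ) ≤ (7 / 9) * E.card := by
  classical
  have hD : DegTwo E := by
    intro v x hx y hy z hz hvx hvy hvz
    by_contra hne
    push Not at hne
    have h3 : ({x, y, z} : Finset (Finset V)).card = 3 :=
      Finset.card_eq_three.2 ⟨x, y, z, hne.1, hne.2.1, hne.2.2, rfl⟩
    have hsub : ({x, y, z} : Finset (Finset V)) ⊆ E.filter (fun e => v ∈ e) := by
      intro t ht
      simp only [Finset.mem_insert, Finset.mem_singleton] at ht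
      rw [Finset.mem_filter]
      rcases ht with rfl | rfl | rfl
      · exact ⟨hx, hvx⟩
      · exact ⟨hy, hvy⟩
      · exact ⟨hz, hvz⟩
    have := Finset.card_le_card hsub
    rw [hreg v] at this
    omega
  have hb := main_bound _ le_rfl h4 hD
  have hp : (playable E).card ≤ Fintype.card V := Finset.card_le_univ _
  have hdc : ∑ v : V, (E.filter (fun e => v ∈ e)).card = ∑ e ∈ E, e.card := by
    simp only [Finset.card_filter]
    rw [Finset.sum_comm]
    refine Finset.sum_congr rfl fun e _ => ?_
    simp
  rw [Finset.sum_congr rfl (fun v _ => hreg v), Finset.sum_congr rfl h4] at hdc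
  simp only [Finset.sum_const, Finset.card_univ, smul_eq_mul] at hdc
  have hfin : 9 * gameVal true E ≤ 7 * E.card := by
    unfold wt at hb
    omega
  have hq : (9 : ℚ) * (gameVal true E : ℚ) ≤ 7 * (E.card : ℚ) := by exact_mod_cast hfin
  unfold gameTransversalNum
  linarith
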